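/- Let F be a collection of real-valued 𝒜-measurable functions on Ω and define 𝒦(F) = {P ∈ M : P(|f|) < ∞ and P(f) = 0 for all f ∈ F}. If lim_{k→∞} sup_{P ∈ M} P(|f|·1(|f| > k)) = 0 for each f ∈ F, then 𝒦(F) is a compact subset of [0,1]^𝒜. -/

import Mathlib

open MeasureTheory Set ENNReal

namespace FATransport

variable {α : Type*} [MeasurableSpace α]

/-- The collection of measurable sets of `α` (the σ-field `𝒜`), as a type. -/
abbrev MSet (α : Type*) [MeasurableSpace α] := {A : Set α // MeasurableSet A}

/-- A finitely additive probability on the σ-field of `α`, viewed as an element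
of `[0,1]^𝒜`: it maps the whole space to `1` and is additive on disjoint pairs. -/
def IsFAP (P : MSet α → unitInterval) : Prop :=
  (P ⟨Set.univ, MeasurableSet.univ⟩ : ℝ) = 1 ∧
    ∀ A B : MSet α, Disjoint A.1 B.1 →
      (P ⟨A.1 ∪ B.1, A.2.union B.2⟩ : ℝ) = (P A : ℝ) + (P B : ℝ)

/-- `ℙ`, the set of all finitely additive probabilities on `𝒜`, as a subset of
`[0,1]^𝒜` (with its product topology). -/
def FAPs (α : Type*) [MeasurableSpace α] : Set (MSet α → unitInterval) :=
  {P | IsFAP P}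

/-- Integral of a simple function with respect to a finitely additive set function. -/
noncomputable def simpleInt (P : MSet α → unitInterval) (s : SimpleFunc α ℝ) : ℝ :=
  ∑ y ∈ s.range, y * (P ⟨(⇑s) ⁻¹' {y}, s.measurableSet_fiber y⟩ : ℝ)

/-- `P(f)` for a bounded measurable `f : α → ℝ`: the supremum of the integrals of
simple functions below `f` (for a f.a.p. `P` and bounded measurable `f` this agrees
with the integral defined by uniform approximation by simple functions). -/
noncomputable def fapInt (P : MSet α → unitInterval) (f : α → ℝ) : ℝ :=
  sSup (simpleInt P '' {s : SimpleFunc α ℝ | ∀ x, s x ≤ f x})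

/-- `P(c) = sup_k P(c ∧ k)` for a `[0,∞]`-valued `c`. -/
noncomputable def fapIntTop (P : MSet α → unitInterval) (c : α → ℝ≥0∞) : ℝ≥0∞ :=
  ⨆ k : ℕ, ENNReal.ofReal (fapInt P (fun x => (c x ⊓ (k : ℝ≥0∞)).toReal))

/-- A real-valued `f` is `P`-integrable iff `P(|f|) < ∞`. -/
def FapIntegrable (P : MSet α → unitInterval) (f : α → ℝ) : Prop :=
  fapIntTop P (fun x => ENNReal.ofReal |f x|) < ⊤

/-- `P(f) = P(f⁺) - P(f⁻)` for a (`P`-integrable) real-valued `f`. -/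
noncomputable def fapIntR (P : MSet α → unitInterval) (f : α → ℝ) : ℝ :=
  (fapIntTop P (fun x => ENNReal.ofReal (f x))).toReal -
    (fapIntTop P (fun x => ENNReal.ofReal (-f x))).toReal

/-- `P ≪ Q` for finitely additive probabilities. -/
def FapAC (P Q : MSet α → unitInterval) : Prop :=
  ∀ A : MSet α, (Q A : ℝ) = 0 → (P A : ℝ) = 0

variable {n : ℕ} {Ω : Fin n → Type*} [∀ i, MeasurableSpace (Ω i)]

/-- `M`, the set of finitely additive probabilities on `𝒜 = ⊗ᵢ 𝒜ᵢ` whose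
`i`-th marginal is `μ i` for every `i`. -/
def couplings (μ : ∀ i, Measure (Ω i)) : Set (MSet (∀ i, Ω i) → unitInterval) :=
  {P | IsFAP P ∧ ∀ (i : Fin n) (B : Set (Ω i)) (hB : MeasurableSet B),
    (P ⟨(fun ω => ω i) ⁻¹' B, (measurable_pi_apply i) hB⟩ : ℝ) = (μ i B).toReal}

end FATransport

namespace FATransport

/-!
`[0,1]^𝒜` is compact, so it suffices that the set in question is closed. The finitely additive
probabilities with given marginals form a closed set, being cut out by equations between
coordinates. A bounded measurable function is within `ε` of a simple function, uniformly on the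
space, so its integral is a uniform limit of functions of `P` that depend on finitely many
coordinates, hence continuous in `P`. Uniform integrability makes `P(|f|)` finite and `P(f⁺)`,
`P(f⁻)` uniform limits of the integrals of truncations. So `P ↦ P(f)` is continuous on the closed
set, and its zero set is closed.
-/

open Filter Topology

section SimpleFunctions

variable {α : Type*} [MeasurableSpace α] {P : MSet α → unitInterval}

open Classical in
/-- The set function `A ↦ (y ↦ P(A) y)`, with the value `0` on non-measurable sets: the form in
which `MeasureTheory.SimpleFunc.setToSimpleFunc` takes the set function to integrate against. -/
noncomputable def mulOperator (P : MSet α → unitInterval) (A : Set α) : ℝ →L[ℝ] ℝ :=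
  if hA : MeasurableSet A then ContinuousLinearMap.mul ℝ ℝ (P ⟨A, hA⟩) else 0

lemma mulOperator_apply (P : MSet α → unitInterval) {A : Set α} (hA : MeasurableSet A) (y : ℝ) :
    mulOperator P A y = P ⟨A, hA⟩ * y := by
  rw [mulOperator, dif_pos hA, ContinuousLinearMap.mul_apply']

lemma simpleInt_eq_setToSimpleFunc (P : MSet α → unitInterval) (s : SimpleFunc α ℝ) :
    simpleInt P s = s.setToSimpleFunc (mulOperator P) :=
  Finset.sum_congr rfl fun y _ => by
    rw [mulOperator_apply P (s.measurableSet_fiber y), mul_comm]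

/-- The reference measure only serves to restrict additivity to sets of finite measure; the zero
measure imposes no restriction. -/
lemma IsFAP.finMeasAdditive_mulOperator (hP : IsFAP P) :
    FinMeasAdditive (0 : Measure α) (mulOperator P) := by
  intro A B hA hB _ _ hAB
  ext
  rw [add_apply, mulOperator_apply P (hA.union hB), mulOperator_apply P hA,
    mulOperator_apply P hB, hP.2 ⟨A, hA⟩ ⟨B, hB⟩ hAB, add_mul]

lemma IsFAP.simpleInt_add (hP : IsFAP P) (s t : SimpleFunc α ℝ) :
    simpleInt P (s + t) = simpleInt P s + simpleInt P t := by
  simp only [simpleInt_eq_setToSimpleFunc]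
  exact SimpleFunc.setToSimpleFunc_add _ hP.finMeasAdditive_mulOperator
    integrable_zero_measure integrable_zero_measure

lemma IsFAP.simpleInt_const (hP : IsFAP P) (y : ℝ) : simpleInt P (SimpleFunc.const α y) = y := by
  rw [simpleInt_eq_setToSimpleFunc,
    SimpleFunc.setToSimpleFunc_const _ hP.finMeasAdditive_mulOperator.map_empty_eq_zero,
    mulOperator_apply P MeasurableSet.univ, hP.1, one_mul]

lemma IsFAP.simpleInt_mono (hP : IsFAP P) {s t : SimpleFunc α ℝ} (hst : s ≤ t) :
    simpleInt P s ≤ simpleInt P t := by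
  simp only [simpleInt_eq_setToSimpleFunc]
  refine SimpleFunc.setToSimpleFunc_mono hP.finMeasAdditive_mulOperator (fun A hA _ y hy => ?_)
    integrable_zero_measure integrable_zero_measure hst
  rw [mulOperator_apply P hA]
  exact mul_nonneg (P _).2.1 hy

lemma exists_simpleFunc_le_le_add_const {g : α → ℝ} (hg : Measurable g) {a b : ℝ}
    (hab : ∀ x, g x ∈ Icc a b) {ε : ℝ} (hε : 0 < ε) :
    ∃ s : SimpleFunc α ℝ, ⇑s ≤ g ∧ g ≤ ⇑(s + SimpleFunc.const α ε) := by
  -- round `g` down to the grid `ε ℤ`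
  let roundDown : α → ℝ := fun x => ⌊g x / ε⌋ * ε
  have measurable_roundDown : Measurable roundDown :=
    (measurable_from_top.comp (hg.div_const ε).floor).mul_const ε
  have finite_range_roundDown : (range roundDown).Finite := by
    refine ((finite_Icc ⌊a / ε⌋ ⌊b / ε⌋).image fun z : ℤ => (z : ℝ) * ε).subset ?_
    rintro _ ⟨x, rfl⟩
    exact ⟨⌊g x / ε⌋, ⟨Int.floor_le_floor (by gcongr; exact (hab x).1),
      Int.floor_le_floor (by gcongr; exact (hab x).2)⟩, rfl⟩
  refine ⟨⟨roundDown, fun y => measurable_roundDown (measurableSet_singleton y),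
    finite_range_roundDown⟩, fun x => ?_, fun x => ?_⟩
  · exact (le_div_iff₀ hε).1 (Int.floor_le (g x / ε))
  · calc g x ≤ (⌊g x / ε⌋ + 1) * ε := (div_le_iff₀ hε).1 (Int.lt_floor_add_one _).le
      _ = ⌊g x / ε⌋ * ε + ε := by ring

end SimpleFunctions

section BoundedFunctions

variable {α : Type*} [MeasurableSpace α] {P : MSet α → unitInterval} {g h : α → ℝ}

lemma IsFAP.bddAbove_simpleInt (hP : IsFAP P) {t : SimpleFunc α ℝ} (hgt : g ≤ ⇑t) :
    BddAbove (simpleInt P '' {s : SimpleFunc α ℝ | ∀ x, s x ≤ g x}) := by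
  refine ⟨simpleInt P t, ?_⟩
  rintro _ ⟨s, hsg, rfl⟩
  exact hP.simpleInt_mono fun x => (hsg x).trans (hgt x)

lemma IsFAP.simpleInt_le_fapInt (hP : IsFAP P) {s t : SimpleFunc α ℝ} (hsg : ⇑s ≤ g)
    (hgt : g ≤ ⇑t) : simpleInt P s ≤ fapInt P g :=
  le_csSup (hP.bddAbove_simpleInt hgt) ⟨s, hsg, rfl⟩

lemma IsFAP.fapInt_le_simpleInt (hP : IsFAP P) {s t : SimpleFunc α ℝ} (hsg : ⇑s ≤ g)
    (hgt : g ≤ ⇑t) : fapInt P g ≤ simpleInt P t := by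
  refine csSup_le ⟨_, s, hsg, rfl⟩ ?_
  rintro _ ⟨r, hrg, rfl⟩
  exact hP.simpleInt_mono fun x => (hrg x).trans (hgt x)

lemma IsFAP.fapInt_nonneg (hP : IsFAP P) {b : ℝ} (hg : ∀ x, g x ∈ Icc 0 b) : 0 ≤ fapInt P g :=
  calc 0 = simpleInt P (SimpleFunc.const α 0) := (hP.simpleInt_const 0).symm
    _ ≤ fapInt P g :=
      hP.simpleInt_le_fapInt (t := SimpleFunc.const α b) (fun x => (hg x).1) fun x => (hg x).2

lemma IsFAP.fapInt_mono (hP : IsFAP P) {a b : ℝ} (hga : ∀ x, a ≤ g x) (hgh : g ≤ h)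
    (hhb : ∀ x, h x ≤ b) : fapInt P g ≤ fapInt P h :=
  csSup_le_csSup (hP.bddAbove_simpleInt (t := SimpleFunc.const α b) hhb)
    ⟨_, SimpleFunc.const α a, hga, rfl⟩
    (image_mono fun _ hs x => (hs x).trans (hgh x))

lemma IsFAP.fapInt_add_le (hP : IsFAP P) (hg : Measurable g) (hh : Measurable h) {a₁ b₁ a₂ b₂ : ℝ}
    (hgab : ∀ x, g x ∈ Icc a₁ b₁) (hhab : ∀ x, h x ∈ Icc a₂ b₂) :
    fapInt P (g + h) ≤ fapInt P g + fapInt P h := by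
  refine le_of_forall_pos_le_add fun ε hε => ?_
  obtain ⟨s, hsg, hgs⟩ := exists_simpleFunc_le_le_add_const hg hgab (half_pos hε)
  obtain ⟨t, hth, hht⟩ := exists_simpleFunc_le_le_add_const hh hhab (half_pos hε)
  calc fapInt P (g + h)
      ≤ simpleInt P ((s + SimpleFunc.const α (ε / 2)) + (t + SimpleFunc.const α (ε / 2))) :=
        hP.fapInt_le_simpleInt (s := s + t) (add_le_add hsg hth) (add_le_add hgs hht)
    _ = simpleInt P s + simpleInt P t + ε := by
        simp only [hP.simpleInt_add, hP.simpleInt_const]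
        ring
    _ ≤ fapInt P g + fapInt P h + ε := by
        gcongr
        exacts [hP.simpleInt_le_fapInt hsg hgs, hP.simpleInt_le_fapInt hth hht]

lemma continuous_eval (A : MSet α) :
    Continuous fun P : MSet α → unitInterval => (P A : ℝ) :=
  continuous_subtype_val.comp (continuous_apply A)

lemma continuous_simpleInt (s : SimpleFunc α ℝ) :
    Continuous fun P : MSet α → unitInterval => simpleInt P s :=
  continuous_finsetSum _ fun _ _ => continuous_const.mul (continuous_eval _)

lemma continuousOn_fapInt (hg : Measurable g) {a b : ℝ} (hab : ∀ x, g x ∈ Icc a b) :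
    ContinuousOn (fun P => fapInt P g) (FAPs α) := by
  refine continuousOn_of_uniform_approx_of_continuousOn fun u hu => ?_
  obtain ⟨ε, hε, hεu⟩ := Metric.mem_uniformity_dist.1 hu
  obtain ⟨s, hsg, hgs⟩ := exists_simpleFunc_le_le_add_const hg hab (half_pos hε)
  refine ⟨fun P => simpleInt P s, (continuous_simpleInt s).continuousOn, fun P hP => hεu ?_⟩
  have lower : simpleInt P s ≤ fapInt P g := IsFAP.simpleInt_le_fapInt hP hsg hgs
  have upper : fapInt P g ≤ simpleInt P s + ε / 2 := by
    simpa only [IsFAP.simpleInt_add hP, IsFAP.simpleInt_const hP] using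
      IsFAP.fapInt_le_simpleInt hP hsg hgs
  rw [Real.dist_eq, abs_lt]
  constructor <;> linarith

end BoundedFunctions

section NonnegativeFunctions

variable {α : Type*}

/-- The truncation `c ∧ k` of a `[0,∞]`-valued function, as the real-valued function whose
integrals define `fapIntTop`. -/
noncomputable def trunc (c : α → ℝ≥0∞) (k : ℕ) (x : α) : ℝ :=
  (c x ⊓ (k : ℝ≥0∞)).toReal

/-- The tail `c · 1(c > k)` of a `[0,∞]`-valued function, which controls the error of replacing
`c` by `c ∧ k`. -/
noncomputable def tail (c : α → ℝ≥0∞) (k : ℕ) : α → ℝ≥0∞ :=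
  {x | (k : ℝ≥0∞) < c x}.indicator c

lemma inf_natCast_ne_top (a : ℝ≥0∞) (k : ℕ) : a ⊓ (k : ℝ≥0∞) ≠ ⊤ :=
  ne_top_of_le_ne_top (natCast_ne_top k) inf_le_right

lemma trunc_mem_Icc (c : α → ℝ≥0∞) (k : ℕ) (x : α) : trunc c k x ∈ Icc 0 (k : ℝ) :=
  ⟨toReal_nonneg, toReal_mono (natCast_ne_top k) inf_le_right⟩

lemma trunc_mono {c d : α → ℝ≥0∞} (hcd : c ≤ d) (k : ℕ) : trunc c k ≤ trunc d k :=
  fun x => toReal_mono (inf_natCast_ne_top _ k) (inf_le_inf_right _ (hcd x))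

lemma tail_mono {c d : α → ℝ≥0∞} (hcd : c ≤ d) (k : ℕ) : tail c k ≤ tail d k :=
  indicator_le fun x hx =>
    (hcd x).trans_eq (indicator_of_mem (s := {x | (k : ℝ≥0∞) < d x}) (hx.trans_le (hcd x)) d).symm

lemma trunc_le_trunc_add_trunc_tail (c : α → ℝ≥0∞) (j k : ℕ) :
    trunc c j ≤ trunc c k + trunc (tail c k) j := by
  intro x
  rcases lt_or_ge (k : ℝ≥0∞) (c x) with hx | hx
  · have tail_eq : trunc (tail c k) j x = trunc c j x := by
      rw [trunc, tail, indicator_of_mem (s := {x | (k : ℝ≥0∞) < c x}) hx, trunc]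
    rw [Pi.add_apply, tail_eq]
    exact le_add_of_nonneg_left (trunc_mem_Icc c k x).1
  · have trunc_le : trunc c j x ≤ trunc c k x :=
      toReal_mono (inf_natCast_ne_top _ k) (inf_le_left.trans_eq (inf_eq_left.2 hx).symm)
    exact trunc_le.trans (le_add_of_nonneg_right (trunc_mem_Icc _ j x).1)

lemma tail_ofReal_abs (f : α → ℝ) (k : ℕ) :
    tail (fun x => ENNReal.ofReal |f x|) k =
      fun x => if (k : ℝ) < |f x| then ENNReal.ofReal |f x| else 0 := by
  ext x
  simp only [tail, indicator_apply, mem_ofPred_eq, natCast_lt_ofReal]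

variable [MeasurableSpace α] {P : MSet α → unitInterval} {c d : α → ℝ≥0∞}

lemma measurable_trunc (hc : Measurable c) (k : ℕ) : Measurable (trunc c k) :=
  (hc.inf measurable_const).ennreal_toReal

lemma measurable_tail (hc : Measurable c) (k : ℕ) : Measurable (tail c k) :=
  hc.indicator (measurableSet_lt measurable_const hc)

lemma ofReal_fapInt_trunc_le_fapIntTop (P : MSet α → unitInterval) (c : α → ℝ≥0∞) (k : ℕ) :
    ENNReal.ofReal (fapInt P (trunc c k)) ≤ fapIntTop P c :=
  le_iSup (fun k : ℕ => ENNReal.ofReal (fapInt P (trunc c k))) k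

lemma IsFAP.fapIntTop_mono (hP : IsFAP P) (hcd : c ≤ d) : fapIntTop P c ≤ fapIntTop P d :=
  iSup_mono fun k => ofReal_le_ofReal <|
    hP.fapInt_mono (fun x => (trunc_mem_Icc c k x).1) (trunc_mono hcd k)
      fun x => (trunc_mem_Icc d k x).2

lemma IsFAP.fapIntTop_le_trunc_add_tail (hP : IsFAP P) (hc : Measurable c) (k : ℕ) :
    fapIntTop P c ≤ ENNReal.ofReal (fapInt P (trunc c k)) + fapIntTop P (tail c k) := by
  refine iSup_le fun j => ?_
  calc ENNReal.ofReal (fapInt P (trunc c j))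
      ≤ ENNReal.ofReal (fapInt P (trunc c k + trunc (tail c k) j)) :=
        ofReal_le_ofReal <| hP.fapInt_mono (fun x => (trunc_mem_Icc c j x).1)
          (trunc_le_trunc_add_trunc_tail c j k)
          fun x => add_le_add (trunc_mem_Icc c k x).2 (trunc_mem_Icc _ j x).2
    _ ≤ ENNReal.ofReal (fapInt P (trunc c k) + fapInt P (trunc (tail c k) j)) :=
        ofReal_le_ofReal <| hP.fapInt_add_le (measurable_trunc hc k)
          (measurable_trunc (measurable_tail hc k) j) (trunc_mem_Icc c k) (trunc_mem_Icc _ j)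
    _ ≤ ENNReal.ofReal (fapInt P (trunc c k)) + ENNReal.ofReal (fapInt P (trunc (tail c k) j)) :=
        ofReal_add_le
    _ ≤ ENNReal.ofReal (fapInt P (trunc c k)) + fapIntTop P (tail c k) := by
        gcongr
        exact ofReal_fapInt_trunc_le_fapIntTop P (tail c k) j

end NonnegativeFunctions

section UniformIntegrability

variable {α : Type*} [MeasurableSpace α] {M : Set (MSet α → unitInterval)} {c d : α → ℝ≥0∞}

/-- Uniform integrability of a `[0,∞]`-valued function `c` over a set `M` of set functions:
`P(c · 1(c > k)) → 0` as `k → ∞`, uniformly in `P ∈ M`. -/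
def UniformlyFapIntegrable (M : Set (MSet α → unitInterval)) (c : α → ℝ≥0∞) : Prop :=
  Tendsto (fun k : ℕ => ⨆ P ∈ M, fapIntTop P (tail c k)) atTop (𝓝 0)

namespace UniformlyFapIntegrable

lemma mono (hM : M ⊆ FAPs α) (hc : UniformlyFapIntegrable M c) (hdc : d ≤ c) :
    UniformlyFapIntegrable M d :=
  tendsto_nhds_bot_mono' hc fun k => iSup₂_mono fun _ hP =>
    IsFAP.fapIntTop_mono (hM hP) (tail_mono hdc k)

lemma eventually_fapIntTop_le_trunc_add (hM : M ⊆ FAPs α) (hc : UniformlyFapIntegrable M c)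
    (hcm : Measurable c) {ε : ℝ} (hε : 0 < ε) :
    ∀ᶠ k : ℕ in atTop, ∀ P ∈ M,
      fapIntTop P c ≤ ENNReal.ofReal (fapInt P (trunc c k)) + ENNReal.ofReal ε := by
  filter_upwards [hc.eventually_le_const (ofReal_pos.2 hε)] with k hk P hP
  have tail_le : fapIntTop P (tail c k) ≤ ENNReal.ofReal ε := (iSup₂_le_iff.1 hk) P hP
  exact (IsFAP.fapIntTop_le_trunc_add_tail (hM hP) hcm k).trans (by gcongr)

lemma fapIntTop_lt_top (hM : M ⊆ FAPs α) (hc : UniformlyFapIntegrable M c)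
    (hcm : Measurable c) {P : MSet α → unitInterval} (hP : P ∈ M) : fapIntTop P c < ⊤ := by
  obtain ⟨k, hk⟩ := (hc.eventually_fapIntTop_le_trunc_add hM hcm one_pos).exists
  exact (hk P hP).trans_lt (by finiteness)

lemma tendstoUniformlyOn_fapInt_trunc (hM : M ⊆ FAPs α) (hc : UniformlyFapIntegrable M c)
    (hcm : Measurable c) :
    TendstoUniformlyOn (fun (k : ℕ) P => fapInt P (trunc c k))
      (fun P => (fapIntTop P c).toReal) atTop M := by
  rw [Metric.tendstoUniformlyOn_iff]
  intro ε hε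
  filter_upwards [hc.eventually_fapIntTop_le_trunc_add hM hcm (half_pos hε)] with k hk P hP
  have lower : fapInt P (trunc c k) ≤ (fapIntTop P c).toReal :=
    (ofReal_le_iff_le_toReal (hc.fapIntTop_lt_top hM hcm hP).ne).1
      (ofReal_fapInt_trunc_le_fapIntTop P c k)
  have upper : (fapIntTop P c).toReal ≤ fapInt P (trunc c k) + ε / 2 := by
    have trunc_nonneg : 0 ≤ fapInt P (trunc c k) :=
      IsFAP.fapInt_nonneg (hM hP) (trunc_mem_Icc c k)
    refine toReal_le_of_le_ofReal (by positivity) ?_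
    rw [ofReal_add trunc_nonneg (half_pos hε).le]
    exact hk P hP
  rw [Real.dist_eq, abs_lt]
  constructor <;> linarith

lemma continuousOn_toReal_fapIntTop (hM : M ⊆ FAPs α) (hc : UniformlyFapIntegrable M c)
    (hcm : Measurable c) : ContinuousOn (fun P => (fapIntTop P c).toReal) M :=
  (hc.tendstoUniformlyOn_fapInt_trunc hM hcm).continuousOn <| .of_forall fun k =>
    (continuousOn_fapInt (measurable_trunc hcm k) (trunc_mem_Icc c k)).mono hM

lemma continuousOn_fapIntR {f : α → ℝ} (hM : M ⊆ FAPs α) (hf : Measurable f)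
    (hUI : UniformlyFapIntegrable M fun x => ENNReal.ofReal |f x|) :
    ContinuousOn (fun P => fapIntR P f) M := by
  have posPart := hUI.mono hM fun x => ofReal_le_ofReal (le_abs_self (f x))
  have negPart := hUI.mono hM fun x => ofReal_le_ofReal (neg_le_abs (f x))
  exact (posPart.continuousOn_toReal_fapIntTop hM hf.ennreal_ofReal).sub
    (negPart.continuousOn_toReal_fapIntTop hM hf.neg.ennreal_ofReal)

lemma isClosed_fapIntR_eq_zero {f : α → ℝ} (hM : M ⊆ FAPs α) (hMc : IsClosed M)
    (hf : Measurable f) (hUI : UniformlyFapIntegrable M fun x => ENNReal.ofReal |f x|) :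
    IsClosed {P ∈ M | FapIntegrable P f ∧ fapIntR P f = 0} := by
  have integrable_of_mem : ∀ P ∈ M, FapIntegrable P f := fun _ hP =>
    hUI.fapIntTop_lt_top hM hf.abs.ennreal_ofReal hP
  have eq_preimage : {P ∈ M | FapIntegrable P f ∧ fapIntR P f = 0} =
      M ∩ (fun P => fapIntR P f) ⁻¹' {0} :=
    Set.ext fun P => and_congr_right fun hP => and_iff_right (integrable_of_mem P hP)
  rw [eq_preimage]
  exact (hUI.continuousOn_fapIntR hM hf).preimage_isClosed_of_isClosed hMc isClosed_singleton

end UniformlyFapIntegrable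

end UniformIntegrability

lemma isClosed_FAPs (α : Type*) [MeasurableSpace α] : IsClosed (FAPs α) := by
  simp only [FAPs, IsFAP, ofPred_and, ofPred_forall]
  exact (isClosed_eq (continuous_eval _) continuous_const).inter <|
    isClosed_iInter fun A => isClosed_iInter fun B => isClosed_iInter fun _ =>
      isClosed_eq (continuous_eval _) ((continuous_eval A).add (continuous_eval B))

lemma isClosed_couplings {n : ℕ} {Ω : Fin n → Type*} [∀ i, MeasurableSpace (Ω i)]
    (μ : ∀ i, Measure (Ω i)) : IsClosed (couplings μ) := by
  simp only [couplings, ofPred_and, ofPred_forall]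
  exact (isClosed_FAPs (∀ i, Ω i)).inter <|
    isClosed_iInter fun _ => isClosed_iInter fun _ => isClosed_iInter fun _ =>
      isClosed_eq (continuous_eval _) continuous_const

theorem kF_compact_general {α : Type*} [MeasurableSpace α] {M : Set (MSet α → unitInterval)}
    (hM : M ⊆ FAPs α) (hMc : IsClosed M) (F : Set (α → ℝ)) (hF : ∀ f ∈ F, Measurable f)
    (hUI : ∀ f ∈ F,
      Tendsto
        (fun k : ℕ => ⨆ P ∈ M,
          fapIntTop P (fun x => if (k : ℝ) < |f x| then ENNReal.ofReal |f x| else 0))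
        atTop (𝓝 0)) :
    IsCompact {P ∈ M | ∀ f ∈ F, FapIntegrable P f ∧ fapIntR P f = 0} := by
  have unifIntegrable : ∀ f ∈ F, UniformlyFapIntegrable M fun x => ENNReal.ofReal |f x| :=
    fun f hf => by simpa only [UniformlyFapIntegrable, tail_ofReal_abs] using hUI f hf
  have eq_iInter : {P ∈ M | ∀ f ∈ F, FapIntegrable P f ∧ fapIntR P f = 0} =
      M ∩ ⋂ f ∈ F, {P ∈ M | FapIntegrable P f ∧ fapIntR P f = 0} := by
    ext P
    simp +contextual only [mem_inter_iff, mem_iInter, mem_ofPred_eq, true_and, and_congr_right_iff,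
      implies_true]
  rw [eq_iInter]
  exact (hMc.inter <| isClosed_biInter fun f hf =>
    (unifIntegrable f hf).isClosed_fapIntR_eq_zero hM hMc (hF f hf)).isCompact

/-- if `F` is a collection of real-valued measurable functions on `Ω`
such that `lim_k sup_{P ∈ M} P(|f|·1(|f|>k)) = 0` for each `f ∈ F`, then
`𝒦(F) = {P ∈ M : P(|f|) < ∞ and P(f) = 0 for all f ∈ F}` is compact. -/
theorem kF_compact
    {n : ℕ} (hn : 0 < n) {Ω : Fin n → Type*} [∀ i, MeasurableSpace (Ω i)]
    (μ : ∀ i, Measure (Ω i)) [∀ i, IsProbabilityMeasure (μ i)]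
    (F : Set ((∀ i, Ω i) → ℝ)) (hF : ∀ f ∈ F, Measurable f)
    (hUI : ∀ f ∈ F,
      Filter.Tendsto
        (fun k : ℕ => ⨆ P ∈ couplings μ,
          fapIntTop P (fun ω => if (k : ℝ) < |f ω| then ENNReal.ofReal |f ω| else 0))
        Filter.atTop (nhds 0)) :
    IsCompact {P ∈ couplings μ | ∀ f ∈ F, FapIntegrable P f ∧ fapIntR P f = 0} :=
  kF_compact_general (fun _ hP => hP.1) (isClosed_couplings μ) F hF hUI

end FATransport
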